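/- arXiv:2307.07809 — 3 statements merged into one kernel-verified Lean document; each statement's English description precedes it below -/
import Mathlib

section
/- Let m be a positive integer. The group G(m,m) is isomorphic to ℤ × F_{m−1}, where F_{m−1} is the free group on m−1 generators, via an isomorphism that sends Δ = s(0,m) = a_0 a_1 ⋯ a_{m−1} to (z,1), where z is a generator of the factor ℤ. -/
/-- The word `a_i a_{i+1} ⋯ a_{i+p-1}` (indices mod `m`) in the free group on `ZMod m`. -/
def circWord (m : ℕ) (i : ZMod m) (p : ℕ) : FreeGroup (ZMod m) :=
  ((List.range p).map (fun k => FreeGroup.of (i + (k : ZMod m)))).prod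

/-- The defining relations of the circular group `G(m,ℓ)`. -/
def circRels (m ℓ : ℕ) : Set (FreeGroup (ZMod m)) :=
  { r | ∃ i : ZMod m, r = circWord m i ℓ * (circWord m (i + 1) ℓ)⁻¹ }

/-- The circular group `G(m,ℓ)`. -/
abbrev CircularGroup (m ℓ : ℕ) := PresentedGroup (circRels m ℓ)

/-- The generator `a_i` of the circular group `G(m,ℓ)`. -/
def circGen (m ℓ : ℕ) (i : ZMod m) : CircularGroup m ℓ :=
  PresentedGroup.of i

/-- The element `s(i,p) = a_i a_{i+1} ⋯ a_{i+p-1}` of the circular group `G(m,ℓ)`. -/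
def circS (m ℓ : ℕ) (i : ZMod m) (p : ℕ) : CircularGroup m ℓ :=
  ((List.range p).map (fun k => circGen m ℓ (i + (k : ZMod m)))).prod

/-- The Garside element `Δ = s(0,ℓ)` of the circular group `G(m,ℓ)`. -/
def circDelta (m ℓ : ℕ) : CircularGroup m ℓ := circS m ℓ 0 ℓ

/-!
The relations say that `Δ` is the product of `a_i, …, a_{i+ℓ-1}` for every `i`; comparing the
two factorizations of `a_i a_{i+1} ⋯ a_{i+ℓ}` they become `Δ a_{i+ℓ} = a_i Δ`. When `ℓ = m` this
says exactly that `Δ` is central. Since `a_{m-1} = (a_0 ⋯ a_{m-2})⁻¹ Δ`, a homomorphism out of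
`G(m,m)` amounts to a free choice of the images of `a_0, …, a_{m-2}` together with a central image
of `Δ`, which is the universal property of `ℤ × F_{m-1}`.
-/

section CyclicProd

variable {M : Type*} {m : ℕ}

lemma apply_eq_apply_zero_of_periodic {α : Type*} {f : ZMod m → α} (hf : Function.Periodic f 1)
    (i : ZMod m) : f i = f 0 := by
  obtain ⟨k, rfl⟩ := ZMod.intCast_surjective i
  simpa using hf.int_mul_eq k

/-- The product `g i * g (i + 1) * ⋯ * g (i + p - 1)`, with indices modulo `m`: the element `s(i,p)`
for an arbitrary family in a monoid. -/
def cyclicProd [Monoid M] (g : ZMod m → M) (i : ZMod m) (p : ℕ) : M :=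
  ((List.range p).map fun k : ℕ => g (i + k)).prod

section Monoid

variable [Monoid M]

lemma map_cyclicProd {N F : Type*} [Monoid N] [FunLike F M N] [MonoidHomClass F M N]
    (φ : F) (g : ZMod m → M) (i : ZMod m) (p : ℕ) :
    φ (cyclicProd g i p) = cyclicProd (φ ∘ g) i p := by
  simp [cyclicProd, map_list_prod, Function.comp_def]

lemma cyclicProd_succ (g : ZMod m → M) (i : ZMod m) (p : ℕ) :
    cyclicProd g i (p + 1) = cyclicProd g i p * g (i + p) :=
  List.prod_range_succ _ _

lemma cyclicProd_succ' (g : ZMod m → M) (i : ZMod m) (p : ℕ) :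
    cyclicProd g i (p + 1) = g i * cyclicProd g (i + 1) p := by
  simp [cyclicProd, List.prod_range_succ', add_assoc, add_comm (1 : ZMod m)]

lemma cyclicProd_mul_eq (g : ZMod m → M) (i : ZMod m) (p : ℕ) :
    cyclicProd g i p * g (i + p) = g i * cyclicProd g (i + 1) p := by
  rw [← cyclicProd_succ, cyclicProd_succ']

lemma cyclicProd_zero_self [NeZero m] (g : ZMod m → M) :
    cyclicProd g 0 m = (List.ofFn (g ∘ ZMod.finEquiv m)).prod := by
  have natCast_eq (j : Fin m) : ((j : ℕ) : ZMod m) = ZMod.finEquiv m j := by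
    obtain ⟨n, rfl⟩ := Nat.exists_eq_succ_of_ne_zero (NeZero.ne m)
    -- `ZMod (n + 1)` unfolds to `Fin (n + 1)`, and `ZMod.finEquiv` to the identity.
    exact Fin.cast_val_eq_self j
  simp only [cyclicProd, zero_add, List.ofFn_eq_map, ← List.map_coe_finRange_eq_range,
    List.map_map, Function.comp_def, natCast_eq]

lemma semiconjBy_cyclicProd_of_periodic {g : ZMod m → M} {p : ℕ}
    (hg : Function.Periodic (cyclicProd g · p) 1) (i : ZMod m) :
    SemiconjBy (cyclicProd g 0 p) (g (i + p)) (g i) := by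
  have h := cyclicProd_mul_eq g i p
  rwa [apply_eq_apply_zero_of_periodic hg i, apply_eq_apply_zero_of_periodic hg (i + 1)] at h

end Monoid

lemma periodic_cyclicProd_of_semiconjBy [CancelMonoid M] {g : ZMod m → M} {p : ℕ}
    (hg : ∀ i, SemiconjBy (cyclicProd g 0 p) (g (i + p)) (g i)) :
    Function.Periodic (cyclicProd g · p) 1 := by
  have add_one_iff (i : ZMod m) :
      cyclicProd g (i + 1) p = cyclicProd g 0 p ↔ cyclicProd g i p = cyclicProd g 0 p := by
    rw [← mul_right_inj (g i), ← cyclicProd_mul_eq, ← (hg i).eq, mul_left_inj]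
  have eq_zero (i : ZMod m) : cyclicProd g i p = cyclicProd g 0 p :=
    (apply_eq_apply_zero_of_periodic (f := fun i => cyclicProd g i p = cyclicProd g 0 p)
      (fun i => propext (add_one_iff i)) i).mpr rfl
  exact fun i => (eq_zero (i + 1)).trans (eq_zero i).symm

end CyclicProd

section SnocOfProd

variable {H : Type*} [Group H] {n : ℕ}

lemma prod_ofFn_eq_init_mul_last {M : Type*} [Monoid M] (g : Fin (n + 1) → M) :
    (List.ofFn g).prod = (List.ofFn (Fin.init g)).prod * g (Fin.last n) := by
  rw [List.ofFn_succ', List.prod_concat, Fin.init_def]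

/-- The family `g` extended by the one last entry that makes the product of all entries, in order,
equal to `z`. It expresses that a family of `n + 1` elements is determined by its first `n` entries
and its product. -/
def snocOfProd (g : Fin n → H) (z : H) : Fin (n + 1) → H :=
  Fin.snoc g ((List.ofFn g).prod⁻¹ * z)

lemma snocOfProd_castSucc (g : Fin n → H) (z : H) (j : Fin n) :
    snocOfProd g z j.castSucc = g j :=
  Fin.snoc_castSucc (α := fun _ => H) ..

lemma prod_ofFn_snocOfProd (g : Fin n → H) (z : H) : (List.ofFn (snocOfProd g z)).prod = z := by
  rw [prod_ofFn_eq_init_mul_last, snocOfProd, Fin.init_snoc, Fin.snoc_last, mul_inv_cancel_left]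

lemma snocOfProd_init_prod (g : Fin (n + 1) → H) :
    snocOfProd (Fin.init g) (List.ofFn g).prod = g := by
  rw [snocOfProd, prod_ofFn_eq_init_mul_last, inv_mul_cancel_left, Fin.snoc_init_self]

lemma comp_snocOfProd {K F : Type*} [Group K] [FunLike F H K] [MonoidHomClass F H K]
    (φ : F) (g : Fin n → H) (z : H) : φ ∘ snocOfProd g z = snocOfProd (φ ∘ g) (φ z) := by
  rw [snocOfProd, Fin.comp_snoc, map_mul, map_inv, map_list_prod, List.map_ofFn, snocOfProd]

end SnocOfProd

section CircularGroup

variable {H : Type*} [Group H] {m ℓ : ℕ}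

lemma circWord_eq_cyclicProd (i : ZMod m) (p : ℕ) :
    circWord m i p = cyclicProd FreeGroup.of i p := by
  -- In `circWord`, `List.range p` is cast to a `List (ZMod m)` through the list monad.
  simp [circWord, cyclicProd, ← List.map_eq_flatMap, Function.comp_def]

lemma circDelta_eq_cyclicProd : circDelta m ℓ = cyclicProd (circGen m ℓ) 0 ℓ := by
  simp [circDelta, circS, cyclicProd, ← List.map_eq_flatMap, Function.comp_def]

lemma periodic_cyclicProd_circGen : Function.Periodic (cyclicProd (circGen m ℓ) · ℓ) 1 := by
  have mk_circWord (i : ZMod m) :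
      PresentedGroup.mk (circRels m ℓ) (circWord m i ℓ) = cyclicProd (circGen m ℓ) i ℓ := by
    rw [circWord_eq_cyclicProd, map_cyclicProd]
    rfl
  intro i
  have h := PresentedGroup.mk_eq_mk_of_mul_inv_mem (rels := circRels m ℓ) ⟨i, rfl⟩
  rw [mk_circWord, mk_circWord] at h
  exact h.symm

lemma semiconjBy_circDelta (i : ZMod m) :
    SemiconjBy (circDelta m ℓ) (circGen m ℓ (i + ℓ)) (circGen m ℓ i) := by
  rw [circDelta_eq_cyclicProd]
  exact semiconjBy_cyclicProd_of_periodic periodic_cyclicProd_circGen i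

lemma circDelta_mem_center (h : m ∣ ℓ) : circDelta m ℓ ∈ Subgroup.center (CircularGroup m ℓ) := by
  have commute_circGen (i : ZMod m) : Commute (circDelta m ℓ) (circGen m ℓ i) := by
    have semiconj := semiconjBy_circDelta (ℓ := ℓ) i
    rwa [(ZMod.natCast_eq_zero_iff ℓ m).mpr h, add_zero] at semiconj
  refine Subgroup.mem_center_iff.mpr fun x => Subgroup.mem_centralizer_singleton_iff.mp ?_
  exact PresentedGroup.generated_by _ _
    (fun i => Subgroup.mem_centralizer_singleton_iff.mpr (commute_circGen i).symm) x

/-- The homomorphism out of `G(m,ℓ)` given by a family satisfying the defining relations,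
which say that `i ↦ s(i,ℓ)` has period `1`. -/
def circLift (g : ZMod m → H) (hg : Function.Periodic (cyclicProd g · ℓ) 1) :
    CircularGroup m ℓ →* H :=
  PresentedGroup.toGroup (f := g) <| by
    rintro _ ⟨i, rfl⟩
    have lift_circWord (j : ZMod m) : FreeGroup.lift g (circWord m j ℓ) = cyclicProd g j ℓ := by
      simp [circWord_eq_cyclicProd, map_cyclicProd, Function.comp_def]
    rw [map_mul, map_inv, lift_circWord, lift_circWord, mul_inv_eq_one]
    exact (hg i).symm

lemma circLift_circGen (g : ZMod m → H) (hg : Function.Periodic (cyclicProd g · ℓ) 1)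
    (i : ZMod m) : circLift g hg (circGen m ℓ i) = g i :=
  PresentedGroup.toGroup.of _

end CircularGroup

section UniversalProperty

variable {H : Type*} [Group H] {n : ℕ}

/-- The generators `a_0, …, a_{n-1}` of `G(n+1,n+1)`, that is, all but the last one. -/
def circInitGen (n : ℕ) : Fin n → CircularGroup (n + 1) (n + 1) :=
  Fin.init (circGen (n + 1) (n + 1) ∘ ZMod.finEquiv (n + 1))

lemma snocOfProd_circInitGen_circDelta :
    snocOfProd (circInitGen n) (circDelta (n + 1) (n + 1)) =
      circGen (n + 1) (n + 1) ∘ ZMod.finEquiv (n + 1) := by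
  rw [circDelta_eq_cyclicProd, cyclicProd_zero_self, circInitGen, snocOfProd_init_prod]

lemma circHom_ext {φ ψ : CircularGroup (n + 1) (n + 1) →* H}
    (hgen : ∀ j, φ (circInitGen n j) = ψ (circInitGen n j))
    (hdelta : φ (circDelta _ _) = ψ (circDelta _ _)) : φ = ψ := by
  have agree : φ ∘ circGen _ _ ∘ ZMod.finEquiv (n + 1) =
      ψ ∘ circGen _ _ ∘ ZMod.finEquiv (n + 1) := by
    rw [← snocOfProd_circInitGen_circDelta, comp_snocOfProd, comp_snocOfProd, hdelta]
    exact congrArg (snocOfProd · _) (funext hgen)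
  refine PresentedGroup.ext fun i => ?_
  obtain ⟨k, rfl⟩ := (ZMod.finEquiv (n + 1)).surjective i
  exact congrFun agree k

lemma cyclicProd_snocOfProd (g : Fin n → H) (z : H) :
    cyclicProd (snocOfProd g z ∘ (ZMod.finEquiv (n + 1)).symm) 0 (n + 1) = z := by
  have symm_comp : (ZMod.finEquiv (n + 1)).symm ∘ ZMod.finEquiv (n + 1) = id :=
    (ZMod.finEquiv (n + 1)).toEquiv.symm_comp_self
  rw [cyclicProd_zero_self, Function.comp_assoc, symm_comp, Function.comp_id,
    prod_ofFn_snocOfProd]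

/-- The homomorphism out of `G(n+1,n+1)` with prescribed images of `a_0, …, a_{n-1}` and a
prescribed central image of `Δ`. -/
def circCentralLift (g : Fin n → H) {z : H} (hz : z ∈ Subgroup.center H) :
    CircularGroup (n + 1) (n + 1) →* H :=
  circLift (snocOfProd g z ∘ (ZMod.finEquiv (n + 1)).symm) <|
    periodic_cyclicProd_of_semiconjBy fun i => by
      rw [cyclicProd_snocOfProd, ZMod.natCast_self, add_zero]
      exact (Subgroup.mem_center_iff.mp hz _).symm

lemma circCentralLift_circInitGen (g : Fin n → H) {z : H} (hz : z ∈ Subgroup.center H)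
    (j : Fin n) : circCentralLift g hz (circInitGen n j) = g j :=
  (circLift_circGen ..).trans <| by
    rw [Function.comp_apply, RingEquiv.symm_apply_apply, snocOfProd_castSucc]

lemma circCentralLift_circDelta (g : Fin n → H) {z : H} (hz : z ∈ Subgroup.center H) :
    circCentralLift g hz (circDelta (n + 1) (n + 1)) = z := by
  have comp_circGen : circCentralLift g hz ∘ circGen (n + 1) (n + 1) =
      snocOfProd g z ∘ (ZMod.finEquiv (n + 1)).symm :=
    funext <| circLift_circGen _ _
  rw [circDelta_eq_cyclicProd, map_cyclicProd, comp_circGen, cyclicProd_snocOfProd]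

end UniversalProperty

section IntProdFree

variable {α G : Type*} [Group G]

lemma inl_mem_center {A B : Type*} [CommGroup A] [Group B] (a : A) :
    MonoidHom.inl A B a ∈ Subgroup.center (A × B) := by
  rw [Subgroup.mem_center_iff]
  rintro ⟨b, w⟩
  simp [mul_comm]

lemma intProdFreeHom_ext {φ ψ : Multiplicative ℤ × FreeGroup α →* G}
    (hfree : ∀ x, φ (MonoidHom.inr _ _ (FreeGroup.of x)) =
      ψ (MonoidHom.inr _ _ (FreeGroup.of x)))
    (hint : φ (MonoidHom.inl _ _ (Multiplicative.ofAdd 1)) =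
      ψ (MonoidHom.inl _ _ (Multiplicative.ofAdd 1))) : φ = ψ := by
  have inl_eq : φ.comp (MonoidHom.inl _ _) = ψ.comp (MonoidHom.inl _ _) := MonoidHom.ext_mint hint
  have inr_eq : φ.comp (MonoidHom.inr _ _) = ψ.comp (MonoidHom.inr _ _) :=
    FreeGroup.ext_hom _ _ hfree
  rw [← φ.noncommCoprod_unique, ← ψ.noncommCoprod_unique]
  simp only [inl_eq, inr_eq]

/-- The homomorphism out of `ℤ × F(α)` with prescribed images of the free generators and a
prescribed central image of the generator of `ℤ`. -/
def intProdFreeLift (g : α → G) {z : G} (hz : z ∈ Subgroup.center G) :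
    Multiplicative ℤ × FreeGroup α →* G :=
  (zpowersHom G z).noncommCoprod (FreeGroup.lift g) fun k w =>
    Commute.zpow_left (Subgroup.mem_center_iff.mp hz (FreeGroup.lift g w)).symm k.toAdd

lemma intProdFreeLift_apply (g : α → G) {z : G} (hz : z ∈ Subgroup.center G)
    (p : Multiplicative ℤ × FreeGroup α) :
    intProdFreeLift g hz p = z ^ p.1.toAdd * FreeGroup.lift g p.2 :=
  rfl

lemma intProdFreeLift_inr_of (g : α → G) {z : G} (hz : z ∈ Subgroup.center G) (x : α) :
    intProdFreeLift g hz (MonoidHom.inr _ _ (FreeGroup.of x)) = g x := by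
  simp [intProdFreeLift_apply]

lemma intProdFreeLift_inl_ofAdd_one (g : α → G) {z : G} (hz : z ∈ Subgroup.center G) :
    intProdFreeLift g hz (MonoidHom.inl _ _ (Multiplicative.ofAdd 1)) = z := by
  simp [intProdFreeLift_apply]

end IntProdFree

/-- The isomorphism `G(n+1,n+1) ≃ ℤ × F_n` matching `a_0, …, a_{n-1}` with the free generators and
`Δ` with the generator of `ℤ`. -/
def circEquivIntProdFree (n : ℕ) :
    CircularGroup (n + 1) (n + 1) ≃* Multiplicative ℤ × FreeGroup (Fin n) :=
  MonoidHom.toMulEquiv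
    (circCentralLift (fun j => MonoidHom.inr _ _ (FreeGroup.of j))
      (inl_mem_center (Multiplicative.ofAdd 1)))
    (intProdFreeLift (circInitGen n) (circDelta_mem_center dvd_rfl))
    (circHom_ext
      (fun j => by simp only [MonoidHom.comp_apply, MonoidHom.id_apply,
        circCentralLift_circInitGen, intProdFreeLift_inr_of])
      (by simp only [MonoidHom.comp_apply, MonoidHom.id_apply,
        circCentralLift_circDelta, intProdFreeLift_inl_ofAdd_one]))
    (intProdFreeHom_ext
      (fun j => by simp only [MonoidHom.comp_apply, MonoidHom.id_apply,
        intProdFreeLift_inr_of, circCentralLift_circInitGen])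
      (by simp only [MonoidHom.comp_apply, MonoidHom.id_apply,
        intProdFreeLift_inl_ofAdd_one, circCentralLift_circDelta]))

lemma circEquivIntProdFree_circDelta (n : ℕ) :
    circEquivIntProdFree n (circDelta _ _) = MonoidHom.inl _ _ (Multiplicative.ofAdd 1) :=
  circCentralLift_circDelta _ (inl_mem_center _)

/-- `G(m,m)` is isomorphic to `ℤ × F_{m-1}` via an isomorphism sending
`Δ = s(0,m)` to `(z, 1)` where `z` is a generator of `ℤ`. -/
theorem circular_group_m_m (m : ℕ) (hm : 0 < m) :
    ∃ f : CircularGroup m m ≃* Multiplicative ℤ × FreeGroup (Fin (m - 1)),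
      f (circDelta m m) = (Multiplicative.ofAdd (1 : ℤ), 1) := by
  obtain ⟨n, rfl⟩ := Nat.exists_eq_succ_of_ne_zero hm.ne'
  exact ⟨circEquivIntProdFree n, circEquivIntProdFree_circDelta n⟩
end

section
/- Let m and ℓ be positive integers. The abelianization of G(m,ℓ) is a free abelian group of rank gcd(m,ℓ), i.e. G(m,ℓ)^{ab} ≅ ℤ^{gcd(m,ℓ)}. -/
lemma circWord_succ (m : ℕ) (i : ZMod m) (p : ℕ) :
    circWord m i (p + 1) = circWord m i p * FreeGroup.of (i + (p : ZMod m)) := by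
  simp [circWord, List.range_succ]

lemma circWord_succ' (m : ℕ) (i : ZMod m) (p : ℕ) :
    circWord m i (p + 1) = FreeGroup.of i * circWord m (i + 1) p := by
  simp [circWord, List.range_succ_eq_map, List.flatMap_map, List.map_flatMap, add_assoc,
    add_comm (1 : ZMod m)]

lemma map_circWord_eq_map_circWord_add_one_iff {A : Type*} [CommGroup A] {m : ℕ}
    (F : FreeGroup (ZMod m) →* A) (i : ZMod m) (ℓ : ℕ) :
    F (circWord m i ℓ) = F (circWord m (i + 1) ℓ) ↔
      F (FreeGroup.of (i + (ℓ : ZMod m))) = F (FreeGroup.of i) := by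
  have hshift : F (circWord m i ℓ) * F (FreeGroup.of (i + (ℓ : ZMod m))) =
      F (circWord m (i + 1) ℓ) * F (FreeGroup.of i) := by
    rw [← map_mul, ← circWord_succ, circWord_succ', map_mul, mul_comm]
  constructor <;> intro h
  · rwa [h, mul_right_inj] at hshift
  · rwa [h, mul_left_inj] at hshift

lemma forall_mem_circRels_map_eq_one_iff {A : Type*} [CommGroup A] {m ℓ : ℕ}
    (F : FreeGroup (ZMod m) →* A) :
    (∀ r ∈ circRels m ℓ, F r = 1) ↔
      Function.Periodic (fun i => F (FreeGroup.of i)) (ℓ : ZMod m) := by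
  simp only [circRels, Set.mem_ofPred_eq, forall_exists_index, forall_eq_apply_imp_iff, map_mul,
    map_inv, mul_inv_eq_one, map_circWord_eq_map_circWord_add_one_iff, Function.Periodic]

lemma periodic_abelianization_of_circGen (m ℓ : ℕ) :
    Function.Periodic (fun i => Abelianization.of (circGen m ℓ i)) (ℓ : ZMod m) :=
  (forall_mem_circRels_map_eq_one_iff (Abelianization.of.comp (PresentedGroup.mk _))).1
    fun _ hr => by rw [MonoidHom.comp_apply, PresentedGroup.one_of_mem hr, map_one]

lemma factorsThrough_mk_of_periodic {α β : Type*} [AddGroup α] {f : α → β} {c : α}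
    (hf : Function.Periodic f c) :
    f.FactorsThrough ((↑) : α → α ⧸ AddSubgroup.zmultiples c) := fun a b hab => by
  rw [← hf.lift_coe a, hab, hf.lift_coe]

/-- If the relators of a group become trivial when its generators are replaced by basis vectors
along a surjection `q : X → Y`, and generators with the same image under `q` agree in the
abelianization, then the abelianization is free abelian on `Y`. -/
noncomputable def abelianizationPresentedGroupEquiv {X Y : Type*} {rels : Set (FreeGroup X)}
    {q : X → Y} (hq : Function.Surjective q)
    (hrels : ∀ r ∈ rels,
      FreeGroup.lift (fun x => Multiplicative.ofAdd (FreeAbelianGroup.of (q x))) r = 1)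
    (hgen : Function.FactorsThrough
      (fun x => Abelianization.of (PresentedGroup.of x : PresentedGroup rels)) q) :
    Abelianization (PresentedGroup rels) ≃* Multiplicative (FreeAbelianGroup Y) :=
  MonoidHom.toMulEquiv
    (Abelianization.lift (PresentedGroup.toGroup hrels))
    (AddMonoidHom.toMultiplicativeLeft (FreeAbelianGroup.lift fun y =>
      Additive.ofMul (Abelianization.of (PresentedGroup.of (Function.surjInv hq y)))))
    (by
      ext x
      simpa using hgen (Function.surjInv_eq hq (q x)))
    (by
      apply MonoidHom.toAdditive.injective
      ext y
      simp [Function.surjInv_eq hq y])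

/-- The abelianization of `G(m,ℓ)` is free abelian on the cosets of the subgroup of `ℤ/m` generated
by `ℓ`, the class of `a_i` corresponding to the coset of `i`. -/
noncomputable def abelianizationCircularGroupEquiv (m ℓ : ℕ) :
    Abelianization (CircularGroup m ℓ) ≃*
      Multiplicative (FreeAbelianGroup (ZMod m ⧸ AddSubgroup.zmultiples (ℓ : ZMod m))) :=
  abelianizationPresentedGroupEquiv QuotientAddGroup.mk_surjective
    ((forall_mem_circRels_map_eq_one_iff _).2 fun i => by simp)
    (factorsThrough_mk_of_periodic (periodic_abelianization_of_circGen m ℓ))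

lemma index_zmultiples_natCast_zmod (m ℓ : ℕ) :
    (AddSubgroup.zmultiples (ℓ : ZMod m)).index = m.gcd ℓ := by
  obtain rfl | hm := eq_or_ne m 0
  · exact (Int.index_zmultiples ℓ).trans (by simp)
  · have hcard := (AddSubgroup.zmultiples (ℓ : ZMod m)).index_mul_card
    rw [Nat.card_zmultiples, ZMod.addOrderOf_coe ℓ hm, Nat.card_zmod] at hcard
    have hdiv : m.gcd ℓ * (m / m.gcd ℓ) = m := Nat.mul_div_cancel' (Nat.gcd_dvd_left m ℓ)
    exact Nat.eq_of_mul_eq_mul_right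
      (Nat.pos_of_ne_zero (right_ne_zero_of_mul (hdiv.trans_ne hm))) (hcard.trans hdiv.symm)

/-- The free abelian group on a type with `n` elements, as integer vectors of length `n`, along an
arbitrarily chosen enumeration of the type. -/
noncomputable def freeAbelianGroupEquivFin {Y : Type*} [Finite Y] {n : ℕ} (hn : Nat.card Y = n) :
    FreeAbelianGroup Y ≃+ (Fin n → ℤ) :=
  (FreeAbelianGroup.equivOfEquiv (Finite.equivFinOfCardEq hn)).trans
    ((FreeAbelianGroup.equivFinsupp _).trans
      (Finsupp.linearEquivFunOnFinite ℤ ℤ (Fin n)).toAddEquiv)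

/-- The abelianization of `G(m,ℓ)` is free abelian of rank `gcd(m,ℓ)`. -/
theorem abelianization_circular_group (m ℓ : ℕ) (hm : 0 < m) (hℓ : 0 < ℓ) :
    Nonempty (Abelianization (CircularGroup m ℓ) ≃*
      Multiplicative (Fin (Nat.gcd m ℓ) → ℤ)) := by
  have hcard : Nat.card (ZMod m ⧸ AddSubgroup.zmultiples (ℓ : ZMod m)) = m.gcd ℓ :=
    index_zmultiples_natCast_zmod m ℓ
  have : Finite (ZMod m ⧸ AddSubgroup.zmultiples (ℓ : ZMod m)) :=
    Nat.finite_of_card_ne_zero (hcard.trans_ne (Nat.gcd_pos_of_pos_left ℓ hm).ne')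
  exact ⟨(abelianizationCircularGroupEquiv m ℓ).trans
    (freeAbelianGroupEquivFin hcard).toMultiplicative⟩
end

section
/- Let m and ℓ be positive integers, let i, i′ ∈ {0,…,m−1} and p, p′ ∈ {0,…,ℓ}. Assume that in M(m,ℓ) neither s(i,p) left-divides s(i′,p′) nor s(i′,p′) left-divides s(i,p). Then: (1) the only common left-divisor of s(i,p) and s(i′,p′) in M(m,ℓ) is 1; and (2) Δ = s(0,ℓ) is a common right-multiple of s(i,p) and s(i′,p′), and every common right-multiple of s(i,p) and s(i′,p′) in M(m,ℓ) is left-divisible by Δ. -/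
/-- The word `a_i a_{i+1} ⋯ a_{i+p-1}` (indices mod `m`) in the free monoid on `ZMod m`. -/
def circMWord (m : ℕ) (i : ZMod m) (p : ℕ) : FreeMonoid (ZMod m) :=
  ((List.range p).map (fun k => FreeMonoid.of (i + (k : ZMod m)))).prod

/-- The defining relations of the circular monoid `M(m,ℓ)`. -/
def circMRels (m ℓ : ℕ) : FreeMonoid (ZMod m) → FreeMonoid (ZMod m) → Prop :=
  fun x y => ∃ i : ZMod m, x = circMWord m i ℓ ∧ y = circMWord m (i + 1) ℓ

/-- The circular monoid `M(m,ℓ)`. -/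
abbrev CircularMonoid (m ℓ : ℕ) := PresentedMonoid (circMRels m ℓ)

/-- The element `s(i,p) = a_i a_{i+1} ⋯ a_{i+p-1}` of the circular monoid `M(m,ℓ)`. -/
def circMS (m ℓ : ℕ) (i : ZMod m) (p : ℕ) : CircularMonoid m ℓ :=
  PresentedMonoid.mk (circMRels m ℓ) (circMWord m i p)

/-- The Garside element `Δ = s(0,ℓ)` of the circular monoid `M(m,ℓ)`. -/
def circMDelta (m ℓ : ℕ) : CircularMonoid m ℓ := circMS m ℓ 0 ℓ

/-! Two words for the same element start with the same letter unless some relation is applied at the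
very front in passing from one to the other. Both sides of every relation of `M(m,ℓ)` spell `Δ`, so
an element left-divisible by two distinct generators is left-divisible by `Δ`. Incomparable
`s(i,p)` and `s(i',p')` start with distinct generators, and `Δ` left-divides neither of them, since
both of them left-divide `Δ`. -/

theorem exists_mul_eq_iff_dvd {M : Type*} [Semigroup M] {x y : M} : (∃ c, x * c = y) ↔ x ∣ y :=
  exists_congr fun _ => eq_comm

section PresentedMonoid

variable {α : Type*} {rels : FreeMonoid α → FreeMonoid α → Prop}

theorem head?_eq_or_dvd_mk_of_mk_eq_mk {d : PresentedMonoid rels}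
    (hd : ∀ v w, rels v w → d ∣ PresentedMonoid.mk rels v) {v w : FreeMonoid α}
    (h : PresentedMonoid.mk rels v = PresentedMonoid.mk rels w) :
    v.toList.head? = w.toList.head? ∨ d ∣ PresentedMonoid.mk rels v := by
  replace h := PresentedMonoid.mk_eq_mk_iff.1 h
  induction h with
  | of v w hvw => exact Or.inr (hd v w hvw)
  | refl v => exact Or.inl rfl
  | symm hvw ih =>
    rw [← PresentedMonoid.mk_eq_mk_iff.2 hvw]
    exact ih.imp_left Eq.symm
  | trans hvw _ ih₁ ih₂ =>
    rw [← PresentedMonoid.mk_eq_mk_iff.2 hvw] at ih₂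
    rcases ih₁ with heq | hdvd
    · rwa [heq]
    · exact Or.inr hdvd
  | @mul v₁ w₁ v₂ w₂ _ _ ih₁ ih₂ =>
    rw [map_mul (PresentedMonoid.mk rels)]
    rcases ih₁ with heq | hdvd
    · cases v₁ with
      | one =>
        obtain rfl : w₁ = 1 := List.head?_eq_none_iff.1 heq.symm
        simpa only [one_mul, map_one] using ih₂
      | of_mul a v =>
        left
        simp only [FreeMonoid.toList_mul, List.head?_append, ← heq, FreeMonoid.toList_of,
          List.head?_cons, Option.some_or]
    · exact Or.inr (hdvd.mul_right _)

theorem dvd_of_of_dvd_of_of_dvd {d x : PresentedMonoid rels}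
    (hd : ∀ v w, rels v w → d ∣ PresentedMonoid.mk rels v) {a b : α} (hab : a ≠ b)
    (ha : PresentedMonoid.of rels a ∣ x) (hb : PresentedMonoid.of rels b ∣ x) : d ∣ x := by
  obtain ⟨y, rfl⟩ := ha
  obtain ⟨z, hyz⟩ := hb
  obtain ⟨v, rfl⟩ := PresentedMonoid.surjective_mk y
  obtain ⟨w, rfl⟩ := PresentedMonoid.surjective_mk z
  have hmk : PresentedMonoid.mk rels (FreeMonoid.of a * v) =
      PresentedMonoid.mk rels (FreeMonoid.of b * w) := hyz
  refine (head?_eq_or_dvd_mk_of_mk_eq_mk hd hmk).resolve_left fun hhead => hab ?_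
  exact Option.some.inj hhead

theorem exists_of_dvd_of_ne_one {x : PresentedMonoid rels} (hx : x ≠ 1) :
    ∃ a, PresentedMonoid.of rels a ∣ x := by
  obtain ⟨v, rfl⟩ := PresentedMonoid.surjective_mk x
  cases v with
  | one => exact absurd (map_one _) hx
  | of_mul a v => exact ⟨a, PresentedMonoid.mk rels v, map_mul _ _ _⟩

end PresentedMonoid

section CircularMonoid

variable (m ℓ : ℕ) (i : ZMod m)

theorem circMWord_add (p q : ℕ) :
    circMWord m i (p + q) = circMWord m i p * circMWord m (i + p) q := by
  simp [circMWord, List.range_add, ← List.map_eq_flatMap, Function.comp_def, add_assoc]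

theorem circMS_zero : circMS m ℓ i 0 = 1 := rfl

theorem circMS_one : circMS m ℓ i 1 = PresentedMonoid.of (circMRels m ℓ) i := by
  simp [circMS, circMWord, PresentedMonoid.of]

theorem circMS_add (p q : ℕ) :
    circMS m ℓ i (p + q) = circMS m ℓ i p * circMS m ℓ (i + p) q := by
  simp only [circMS, circMWord_add, map_mul]

theorem circMS_dvd_circMS_of_le {p q : ℕ} (hpq : p ≤ q) : circMS m ℓ i p ∣ circMS m ℓ i q := by
  obtain ⟨r, rfl⟩ := Nat.exists_eq_add_of_le hpq
  exact ⟨_, circMS_add m ℓ i p r⟩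

theorem of_dvd_circMS {p : ℕ} (hp : 0 < p) :
    PresentedMonoid.of (circMRels m ℓ) i ∣ circMS m ℓ i p :=
  circMS_one m ℓ i ▸ circMS_dvd_circMS_of_le m ℓ i hp

theorem circMS_eq_circMDelta : circMS m ℓ i ℓ = circMDelta m ℓ := by
  have hperiodic : Function.Periodic (fun j : ZMod m => circMS m ℓ j ℓ) 1 := fun j =>
    (PresentedMonoid.mk_eq_mk_of_rel ⟨j, rfl, rfl⟩).symm
  obtain ⟨n, rfl⟩ := ZMod.intCast_surjective i
  simpa only [mul_one, circMDelta] using hperiodic.int_mul_eq n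

variable {m ℓ i}

theorem circMS_dvd_circMDelta {p : ℕ} (hp : p ≤ ℓ) : circMS m ℓ i p ∣ circMDelta m ℓ :=
  circMS_eq_circMDelta m ℓ i ▸ circMS_dvd_circMS_of_le m ℓ i hp

theorem circMDelta_dvd_of_of_dvd_of_of_dvd {j : ZMod m} (hij : i ≠ j) {x : CircularMonoid m ℓ}
    (hi : PresentedMonoid.of (circMRels m ℓ) i ∣ x)
    (hj : PresentedMonoid.of (circMRels m ℓ) j ∣ x) : circMDelta m ℓ ∣ x := by
  refine dvd_of_of_dvd_of_of_dvd ?_ hij hi hj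
  rintro _ _ ⟨k, rfl, rfl⟩
  exact (circMS_eq_circMDelta m ℓ k).symm.dvd

theorem eq_one_of_dvd_of_dvd_of_not_circMDelta_dvd {j : ZMod m} (hij : i ≠ j)
    {u x y : CircularMonoid m ℓ} (hx : PresentedMonoid.of (circMRels m ℓ) i ∣ x)
    (hy : PresentedMonoid.of (circMRels m ℓ) j ∣ y) (hΔx : ¬ circMDelta m ℓ ∣ x)
    (hΔy : ¬ circMDelta m ℓ ∣ y) (hux : u ∣ x) (huy : u ∣ y) : u = 1 := by
  by_contra hu
  obtain ⟨k, hku⟩ := exists_of_dvd_of_ne_one hu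
  have hik : i = k := by_contra fun hne =>
    hΔx (circMDelta_dvd_of_of_dvd_of_of_dvd hne hx (hku.trans hux))
  have hjk : j = k := by_contra fun hne =>
    hΔy (circMDelta_dvd_of_of_dvd_of_of_dvd hne hy (hku.trans huy))
  exact hij (hik.trans hjk.symm)

theorem pos_of_not_circMS_dvd {p : ℕ} {x : CircularMonoid m ℓ} (h : ¬ circMS m ℓ i p ∣ x) :
    0 < p := by
  refine Nat.pos_of_ne_zero ?_
  rintro rfl
  exact h (circMS_zero m ℓ i ▸ one_dvd x)

theorem ne_of_not_circMS_dvd_circMS {j : ZMod m} {p q : ℕ}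
    (hij : ¬ circMS m ℓ i p ∣ circMS m ℓ j q) (hji : ¬ circMS m ℓ j q ∣ circMS m ℓ i p) :
    i ≠ j := by
  rintro rfl
  rcases le_total p q with hpq | hqp
  · exact hij (circMS_dvd_circMS_of_le m ℓ i hpq)
  · exact hji (circMS_dvd_circMS_of_le m ℓ i hqp)

end CircularMonoid

/-- If neither of the simple elements `s(i,p)`, `s(i',p')` left-divides the other, then
their only common left-divisor is `1`, and `Δ` is their least common right-multiple. -/
theorem gcd_lcm_simples (m ℓ : ℕ) (hm : 0 < m) (hℓ : 0 < ℓ)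
    (i i' : ZMod m) (p p' : ℕ) (hp : p ≤ ℓ) (hp' : p' ≤ ℓ)
    (h1 : ¬ ∃ c : CircularMonoid m ℓ, circMS m ℓ i p * c = circMS m ℓ i' p')
    (h2 : ¬ ∃ c : CircularMonoid m ℓ, circMS m ℓ i' p' * c = circMS m ℓ i p) :
    (∀ u : CircularMonoid m ℓ, (∃ c, u * c = circMS m ℓ i p) →
      (∃ c, u * c = circMS m ℓ i' p') → u = 1) ∧
    ((∃ c, circMS m ℓ i p * c = circMDelta m ℓ) ∧
      (∃ c, circMS m ℓ i' p' * c = circMDelta m ℓ)) ∧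
    (∀ x : CircularMonoid m ℓ, (∃ c, circMS m ℓ i p * c = x) →
      (∃ c, circMS m ℓ i' p' * c = x) → ∃ c, circMDelta m ℓ * c = x) := by
  simp only [exists_mul_eq_iff_dvd] at h1 h2 ⊢
  have hne : i ≠ i' := ne_of_not_circMS_dvd_circMS h1 h2
  have hi := of_dvd_circMS m ℓ i (pos_of_not_circMS_dvd h1)
  have hi' := of_dvd_circMS m ℓ i' (pos_of_not_circMS_dvd h2)
  have hΔ : circMS m ℓ i p ∣ circMDelta m ℓ := circMS_dvd_circMDelta hp
  have hΔ' : circMS m ℓ i' p' ∣ circMDelta m ℓ := circMS_dvd_circMDelta hp'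
  refine ⟨fun u hu hu' => ?_, ⟨hΔ, hΔ'⟩, fun x hx hx' => ?_⟩
  · exact eq_one_of_dvd_of_dvd_of_not_circMDelta_dvd hne hi hi' (fun h => h2 (hΔ'.trans h))
      (fun h => h1 (hΔ.trans h)) hu hu'
  · exact circMDelta_dvd_of_of_dvd_of_of_dvd hne (hi.trans hx) (hi'.trans hx')
end
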